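/- Let D be a bounded domain in ℝ^d satisfying conditions (A) and (D). Then for every continuous function h : [0,∞) → ℝ^d with h(0) ∈ closure(D), there exists a unique pair (x, k) solving the Skorohod problem (h, D, 𝒩). -/

import Mathlib

open MeasureTheory Set
open scoped RealInnerProductSpace ENNReal

noncomputable section

abbrev Ed (d : ℕ) := EuclideanSpace ℝ (Fin d)

/-- The set `𝒩_{x,r}` of inward unit normals at `x` realized by a ball of radius `r`. -/
def normalCone {d : ℕ} (D : Set (Ed d)) (x : Ed d) (r : ℝ) : Set (Ed d) :=
  {n | ‖n‖ = 1 ∧ Metric.ball (x - r • n) r ∩ D = ∅}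

/-- The set `𝒩_x` of inward unit normals at `x`. -/
def inwardNormals {d : ℕ} (D : Set (Ed d)) (x : Ed d) : Set (Ed d) :=
  ⋃ r > (0:ℝ), normalCone D x r

/-- Condition (A) with constant `r₀`. -/
def CondA {d : ℕ} (D : Set (Ed d)) (r₀ : ℝ) : Prop :=
  0 < r₀ ∧ ∀ x ∈ frontier D,
    inwardNormals D x = normalCone D x r₀ ∧ (normalCone D x r₀).Nonempty

/-- Condition (B) with constants `δ₀`, `β`. -/
def CondB {d : ℕ} (D : Set (Ed d)) (δ₀ β : ℝ) : Prop :=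
  0 < δ₀ ∧ 1 ≤ β ∧ ∀ x ∈ frontier D, ∃ l : Ed d, ‖l‖ = 1 ∧
    ∀ y ∈ Metric.ball x δ₀ ∩ frontier D, ∀ n ∈ inwardNormals D y, (1:ℝ)/β ≤ ⟪l, n⟫

/-- Condition (D) with data `m, lam, R, a, xs`. -/
def CondD {d : ℕ} (D : Set (Ed d)) (m : ℕ) (lam R : ℝ) (a xs : Fin m → Ed d) : Prop :=
  1 ≤ m ∧ 0 < lam ∧ 0 < R ∧ (∀ i, ‖a i‖ = 1) ∧ (∀ i, xs i ∈ frontier D) ∧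
  frontier D ⊆ ⋃ i, Metric.ball (xs i) R ∧
  ∀ x ∈ frontier D, ∀ i, x ∈ Metric.ball (xs i) (2*R) →
    ∀ n ∈ inwardNormals D x, lam ≤ ⟪n, a i⟫

/-- The pair `(x, k)` solves the Skorohod problem `(h, D, 𝒩)` on `[0, T]`. -/
structure IsSkorohodSolution {d : ℕ} (D : Set (Ed d)) (h x k : ℝ → Ed d) (T : ℝ) : Prop where
  h0_mem : h 0 ∈ closure D
  decomp : ∀ t ∈ Icc 0 T, x t = h t + k t
  cont : ContinuousOn x (Icc 0 T)
  mem_closure : ∀ t ∈ Icc 0 T, x t ∈ closure D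
  init : x 0 = h 0
  cont_k : ContinuousOn k (Icc 0 T)
  k_zero : k 0 = 0
  bv : eVariationOn k (Icc 0 T) ≠ ⊤
  reflect : ∃ (μ : Measure ℝ) (n : ℝ → Ed d), Measurable n ∧
    (∀ t ∈ Icc 0 T, μ (Icc 0 t) = eVariationOn k (Icc 0 t)) ∧
    (∀ t ∈ Icc 0 T, k t = ∫ s in Icc 0 t, n s ∂μ) ∧
    (∀ᵐ s ∂(μ.restrict (Icc 0 T)), x s ∈ frontier D ∧ n s ∈ inwardNormals D (x s))

/-- `‖f‖_{[s,t]} = sup_{u,v∈[s,t]} |f u - f v|`. -/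
def oscNorm {E : Type*} [NormedAddCommGroup E] (f : ℝ → E) (s t : ℝ) : ℝ :=
  sSup {c | ∃ u ∈ Icc s t, ∃ v ∈ Icc s t, c = ‖f u - f v‖}

/-- `‖f‖_{[s,t],θ}`: the `θ`-Hölder seminorm on `[s,t]`. -/
def holderSemi {E : Type*} [NormedAddCommGroup E] (f : ℝ → E) (s t θ : ℝ) : ℝ :=
  sSup {c | ∃ u ∈ Icc s t, ∃ v ∈ Icc s t, u ≠ v ∧ c = ‖f u - f v‖ / |u - v| ^ θ}

/-!
Condition (D) yields condition (B): near every boundary point the inward normals share a direction.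
Condition (A) says that a normal `n` at `x` is proximal with a uniform radius,
`0 ≤ ⟪y - x, n⟫ + ‖y - x‖² / (2 r₀)` for all `y ∈ closure D`.

For existence, follow the increments of `h` along a fine grid and project onto `closure D` after
each step. By (B), the variation of the correction over a short window is comparable to its
displacement; by (A), the squared displacement of the path is at most a small multiple of that
variation plus the oscillation of `h`. Together they give a modulus of continuity which does not
depend on the mesh, so that the scheme and its variation have continuous limits along an
ultrafilter. In the limit, increments of `k` over `[u - ε, u + ε]` are asymptotically proximal
normals at `x u`, and differentiating `k` with respect to its own variation measure shows that its
density is a unit inward normal almost everywhere.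

For uniqueness, (A) applied to both solutions bounds `d‖x - x'‖²` by
`r₀⁻¹ ‖x - x'‖² d(|k| + |k'|)`, and `x = x'` follows as in Gronwall's lemma.
-/

/-! ### Inward normals -/

section Normals

variable {d : ℕ} {D : Set (Ed d)} {x y n : Ed d} {r : ℝ}

lemma le_norm_sub_add_smul_of_mem_normalCone (hn : n ∈ normalCone D x r) (hy : y ∈ closure D) :
    r ≤ ‖y - x + r • n‖ := by
  have hdisj : Disjoint (Metric.ball (x - r • n) r) (closure D) :=
    (disjoint_iff_inter_eq_empty.2 hn.2).closure_right Metric.isOpen_ball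
  have hdist : y ∉ Metric.ball (x - r • n) r := disjoint_right.1 hdisj hy
  rwa [Metric.mem_ball, not_lt, dist_eq_norm, sub_sub_eq_add_sub, add_sub_right_comm] at hdist

lemma norm_add_smul_sq {E : Type*} [NormedAddCommGroup E] [InnerProductSpace ℝ E] {u n : E}
    (hn : ‖n‖ = 1) (r : ℝ) :
    ‖u + r • n‖ ^ 2 = ‖u‖ ^ 2 + 2 * r * ⟪u, n⟫ + r ^ 2 := by
  rw [norm_add_sq_real, norm_smul, hn, inner_smul_right, mul_one, Real.norm_eq_abs, sq_abs]
  ring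

lemma inner_add_sq_div_nonneg_of_mem_normalCone (hr : 0 < r) (hn : n ∈ normalCone D x r)
    (hy : y ∈ closure D) : 0 ≤ ⟪y - x, n⟫ + ‖y - x‖ ^ 2 / (2 * r) := by
  have hsq : r ^ 2 ≤ ‖y - x + r • n‖ ^ 2 := by
    gcongr
    exact le_norm_sub_add_smul_of_mem_normalCone hn hy
  rw [norm_add_smul_sq hn.1] at hsq
  have hmul : 0 ≤ (‖y - x‖ ^ 2 + 2 * r * ⟪y - x, n⟫) / (2 * r) :=
    div_nonneg (by linarith) (by positivity)
  convert hmul using 1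
  field_simp
  ring

lemma mem_inwardNormals_of_forall_inner_add_mul_sq_nonneg {c : ℝ} (hn : ‖n‖ = 1)
    (hc : ∀ y ∈ D, 0 ≤ ⟪y - x, n⟫ + c * ‖y - x‖ ^ 2) : n ∈ inwardNormals D x := by
  set r : ℝ := 1 / (2 * (|c| + 1)) with hr_def
  have hr : 0 < r := by positivity
  refine mem_iUnion₂.2 ⟨r, hr, hn, eq_empty_of_forall_notMem ?_⟩
  rintro y ⟨hball, hy⟩
  rw [Metric.mem_ball, dist_eq_norm, sub_sub_eq_add_sub, add_sub_right_comm] at hball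
  have hsq : ‖y - x + r • n‖ ^ 2 < r ^ 2 := by gcongr
  rw [norm_add_smul_sq hn] at hsq
  have hprox : 0 ≤ 2 * r * (⟪y - x, n⟫ + (|c| + 1) * ‖y - x‖ ^ 2) := by
    have := hc y hy
    have : c * ‖y - x‖ ^ 2 ≤ (|c| + 1) * ‖y - x‖ ^ 2 := by
      gcongr
      linarith [le_abs_self c]
    exact mul_nonneg (by positivity) (by linarith)
  have hrc : 2 * r * (|c| + 1) = 1 := by
    rw [hr_def]
    field_simp
  linarith [congrArg (· * ‖y - x‖ ^ 2) hrc]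

lemma mem_frontier_of_mem_inwardNormals (hx : x ∈ closure D) (hn : n ∈ inwardNormals D x) :
    x ∈ frontier D := by
  obtain ⟨r, hr, hn_norm, hn_disj⟩ := mem_iUnion₂.1 hn
  have hx_ball : x ∈ closure (Metric.ball (x - r • n) r) := by
    rw [closure_ball _ hr.ne', Metric.mem_closedBall, dist_eq_norm, sub_sub_cancel, norm_smul,
      hn_norm, mul_one, Real.norm_of_nonneg hr.le]
  refine ⟨hx, fun hx_int => ?_⟩
  obtain ⟨y, hy, hy_ball⟩ := mem_closure_iff.1 hx_ball _ isOpen_interior hx_int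
  exact eq_empty_iff_forall_notMem.1 hn_disj y ⟨hy_ball, interior_subset hy⟩

lemma normalize_mem_inwardNormals_of_infDist_eq_dist {z : Ed d}
    (hx : Metric.infDist z (closure D) = dist z x) (hne : x - z ≠ 0) :
    ‖x - z‖⁻¹ • (x - z) ∈ inwardNormals D x := by
  refine mem_iUnion₂.2 ⟨‖x - z‖, norm_pos_iff.2 hne, norm_smul_inv_norm hne, ?_⟩
  rw [smul_inv_smul₀ (norm_ne_zero_iff.2 hne), sub_sub_cancel]
  refine eq_empty_of_forall_notMem fun y ⟨hball, hy⟩ => ?_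
  have hle : dist z x ≤ dist z y := hx ▸ Metric.infDist_le_dist_of_mem (subset_closure hy)
  rw [Metric.mem_ball, ← dist_eq_norm, dist_comm, dist_comm x] at hball
  exact hball.not_ge hle

lemma norm_eq_one_of_mem_inwardNormals (hn : n ∈ inwardNormals D x) : ‖n‖ = 1 := by
  obtain ⟨r, -, hn⟩ := mem_iUnion₂.1 hn
  exact hn.1

lemma CondA.inner_add_sq_div_nonneg (hA : CondA D r) (hx : x ∈ closure D)
    (hn : n ∈ inwardNormals D x) (hy : y ∈ closure D) :
    0 ≤ ⟪y - x, n⟫ + ‖y - x‖ ^ 2 / (2 * r) := by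
  rw [(hA.2 x (mem_frontier_of_mem_inwardNormals hx hn)).1] at hn
  exact inner_add_sq_div_nonneg_of_mem_normalCone hA.1 hn hy

lemma CondD.exists_condB {m : ℕ} {lam R : ℝ} {a xs : Fin m → Ed d} (hD : CondD D m lam R a xs) :
    ∃ β, CondB D R β := by
  obtain ⟨-, hlam, hR, ha, -, hcover, hdir⟩ := hD
  refine ⟨max 1 (1 / lam), hR, le_max_left _ _, fun x hx => ?_⟩
  obtain ⟨i, hi⟩ := mem_iUnion.1 (hcover hx)
  refine ⟨a i, ha i, fun y ⟨hyx, hy⟩ n hn => ?_⟩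
  have hy_ball : y ∈ Metric.ball (xs i) (2 * R) := by
    rw [Metric.mem_ball] at hi hyx ⊢
    linarith [dist_triangle y x (xs i)]
  calc 1 / max 1 (1 / lam) ≤ 1 / (1 / lam) := by gcongr; exact le_max_right _ _
    _ = lam := one_div_one_div lam
    _ ≤ ⟪a i, n⟫ := real_inner_comm n (a i) ▸ hdir y hy i hy_ball n hn

end Normals

/-! ### The time-discrete problem -/

section DiscreteVariation

variable {E : Type*} [NormedAddCommGroup E] {k : ℕ → E} {p q : ℕ}

/-- The total variation of the sequence `k` between the indices `p` and `q`. -/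
def discreteVariation (k : ℕ → E) (p q : ℕ) : ℝ :=
  ∑ j ∈ Finset.Ico p q, ‖k (j + 1) - k j‖

lemma discreteVariation_nonneg (k : ℕ → E) (p q : ℕ) : 0 ≤ discreteVariation k p q :=
  Finset.sum_nonneg fun _ _ => norm_nonneg _

lemma discreteVariation_add {r : ℕ} (k : ℕ → E) (hpq : p ≤ q) (hqr : q ≤ r) :
    discreteVariation k p q + discreteVariation k q r = discreteVariation k p r :=
  Finset.sum_Ico_consecutive _ hpq hqr

lemma norm_sub_le_discreteVariation (k : ℕ → E) (hpq : p ≤ q) :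
    ‖k q - k p‖ ≤ discreteVariation k p q := by
  rw [← Finset.sum_Ico_sub k hpq]
  exact norm_sum_le _ _

variable [InnerProductSpace ℝ E]

lemma mul_discreteVariation_le_inner {v : E} {c : ℝ} (hpq : p ≤ q)
    (hc : ∀ j ∈ Ico p q, c * ‖k (j + 1) - k j‖ ≤ ⟪v, k (j + 1) - k j⟫) :
    c * discreteVariation k p q ≤ ⟪v, k q - k p⟫ := by
  rw [discreteVariation, Finset.mul_sum, ← Finset.sum_Ico_sub k hpq, inner_sum]
  exact Finset.sum_le_sum fun j hj => hc j (Finset.mem_Ico.1 hj)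

lemma norm_sub_sq_le_mul_discreteVariation {C : ℝ} (hpq : p ≤ q)
    (hC : ∀ j ∈ Ico p q, ⟪k (j + 1) - k p, k (j + 1) - k j⟫ ≤ C * ‖k (j + 1) - k j‖) :
    ‖k q - k p‖ ^ 2 ≤ 2 * C * discreteVariation k p q := by
  have hstep (j : ℕ) (hj : j ∈ Finset.Ico p q) :
      ‖k (j + 1) - k p‖ ^ 2 - ‖k j - k p‖ ^ 2 ≤ 2 * C * ‖k (j + 1) - k j‖ := by
    have hexpand := norm_sub_sq_real (k (j + 1) - k p) (k (j + 1) - k j)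
    rw [sub_sub_sub_cancel_left] at hexpand
    have := hC j (Finset.mem_Ico.1 hj)
    nlinarith [sq_nonneg ‖k (j + 1) - k j‖]
  have hsum := Finset.sum_le_sum hstep
  rw [Finset.sum_Ico_sub (fun j => ‖k j - k p‖ ^ 2) hpq, ← Finset.mul_sum] at hsum
  simpa [discreteVariation] using hsum

end DiscreteVariation

/-- A time-discrete path `x = h + k` reflected in `K`: the correction `k` moves at step `j` along a
proximal normal of `K` at `x (j + 1)` of radius `r` (a field which is trivial if `k` does not move),
and all corrections made within distance `δ` of a given correction point have a component of
relative size at least `c` along a common direction `l`. -/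
structure IsDiscreteReflection {E : Type*} [NormedAddCommGroup E] [InnerProductSpace ℝ E]
    (K : Set E) (r δ c : ℝ) (h x k : ℕ → E) : Prop where
  decomp : ∀ j, x j = h j + k j
  mem : ∀ j, x j ∈ K
  norm_step_le : ∀ j, ‖k (j + 1) - k j‖ ≤ ‖h (j + 1) - h j‖
  proximal : ∀ j, ∀ y ∈ K, 0 ≤ ⟪y - x (j + 1), k (j + 1) - k j⟫ +
    ‖y - x (j + 1)‖ ^ 2 / (2 * r) * ‖k (j + 1) - k j‖
  exists_direction : ∀ j, k (j + 1) ≠ k j → ∃ l : E, ‖l‖ = 1 ∧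
    ∀ i, ‖x (i + 1) - x (j + 1)‖ < δ → c * ‖k (i + 1) - k i‖ ≤ ⟪l, k (i + 1) - k i⟫

namespace IsDiscreteReflection

variable {E : Type*} [NormedAddCommGroup E] [InnerProductSpace ℝ E]
  {K : Set E} {r δ c ρ ω η : ℝ} {h x k : ℕ → E} {p q : ℕ}

lemma sub_eq (S : IsDiscreteReflection K r δ c h x k) (p q : ℕ) :
    k q - k p = (x q - x p) - (h q - h p) := by
  rw [S.decomp, S.decomp]
  abel

lemma discreteVariation_le (S : IsDiscreteReflection K r δ c h x k) (hc : 0 < c) (hρδ : 2 * ρ < δ)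
    (hpq : p ≤ q) (hx : ∀ j ∈ Icc p q, ‖x j - x p‖ ≤ ρ) (hh : ‖h q - h p‖ ≤ ω) :
    discreteVariation k p q ≤ (ρ + ω) / c := by
  have hbound : ‖k q - k p‖ ≤ ρ + ω := by
    rw [S.sub_eq]
    exact (norm_sub_le _ _).trans (add_le_add (hx q ⟨hpq, le_rfl⟩) hh)
  by_cases hrest : ∀ j ∈ Finset.Ico p q, k (j + 1) = k j
  · have hzero : discreteVariation k p q = 0 :=
      Finset.sum_eq_zero fun j hj => by rw [hrest j hj, sub_self, norm_zero]
    rw [hzero]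
    exact div_nonneg ((norm_nonneg _).trans hbound) hc.le
  push Not at hrest
  obtain ⟨j, hj, hmove⟩ := hrest
  rw [Finset.mem_Ico] at hj
  obtain ⟨l, hl, hdir⟩ := S.exists_direction j hmove
  have hclose (i : ℕ) (hi : i ∈ Ico p q) : ‖x (i + 1) - x (j + 1)‖ < δ := by
    rw [← sub_sub_sub_cancel_right _ _ (x p)]
    have := hx (i + 1) ⟨hi.1.trans i.le_succ, hi.2⟩
    have := hx (j + 1) ⟨hj.1.trans j.le_succ, hj.2⟩
    linarith [norm_sub_le (x (i + 1) - x p) (x (j + 1) - x p)]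
  rw [le_div_iff₀' hc]
  calc c * discreteVariation k p q ≤ ⟪l, k q - k p⟫ :=
        mul_discreteVariation_le_inner hpq fun i hi => hdir i (hclose i hi)
    _ ≤ ‖l‖ * ‖k q - k p‖ := real_inner_le_norm _ _
    _ ≤ ρ + ω := by rwa [hl, one_mul]

lemma norm_correction_sub_sq_le (S : IsDiscreteReflection K r δ c h x k) (hr : 0 < r) (hpq : p ≤ q)
    (hx : ∀ j ∈ Icc p q, ‖x j - x p‖ ≤ ρ) (hh : ∀ j ∈ Icc p q, ‖h j - h p‖ ≤ ω) :
    ‖k q - k p‖ ^ 2 ≤ 2 * (ρ ^ 2 / (2 * r) + ω) * discreteVariation k p q := by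
  refine norm_sub_sq_le_mul_discreteVariation hpq fun j hj => ?_
  have hmem : j + 1 ∈ Icc p q := ⟨hj.1.trans j.le_succ, hj.2⟩
  set Δ := k (j + 1) - k j
  have hprox := S.proximal j (x p) (S.mem p)
  rw [← neg_sub (x (j + 1)), inner_neg_left, norm_neg] at hprox
  calc ⟪k (j + 1) - k p, Δ⟫ = ⟪x (j + 1) - x p, Δ⟫ - ⟪h (j + 1) - h p, Δ⟫ := by
        rw [S.sub_eq, inner_sub_left]
    _ ≤ ‖x (j + 1) - x p‖ ^ 2 / (2 * r) * ‖Δ‖ + ‖h (j + 1) - h p‖ * ‖Δ‖ := by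
        linarith [neg_le_of_abs_le (abs_real_inner_le_norm (h (j + 1) - h p) Δ)]
    _ ≤ ρ ^ 2 / (2 * r) * ‖Δ‖ + ω * ‖Δ‖ := by
        gcongr
        exacts [hx _ hmem, hh _ hmem]
    _ = (ρ ^ 2 / (2 * r) + ω) * ‖Δ‖ := by ring

lemma norm_sub_sq_le (S : IsDiscreteReflection K r δ c h x k) (hr : 0 < r) (hpq : p ≤ q)
    (hx : ∀ j ∈ Icc p q, ‖x j - x p‖ ≤ ρ) (hh : ∀ j ∈ Icc p q, ‖h j - h p‖ ≤ ω) :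
    ‖x q - x p‖ ^ 2 ≤ ω ^ 2 + (ρ ^ 2 / r + 4 * ω) * discreteVariation k p q := by
  have hhq := hh q ⟨hpq, le_rfl⟩
  have hcorr := S.norm_correction_sub_sq_le hr hpq hx hh
  have hinner : ⟪h q - h p, k q - k p⟫ ≤ ω * discreteVariation k p q :=
    (real_inner_le_norm _ _).trans <|
      mul_le_mul hhq (norm_sub_le_discreteVariation k hpq) (norm_nonneg _)
        ((norm_nonneg _).trans hhq)
  calc ‖x q - x p‖ ^ 2 = ‖(h q - h p) + (k q - k p)‖ ^ 2 := by rw [S.sub_eq]; abel_nf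
    _ = ‖h q - h p‖ ^ 2 + 2 * ⟪h q - h p, k q - k p⟫ + ‖k q - k p‖ ^ 2 := norm_add_sq_real _ _
    _ ≤ ω ^ 2 + 2 * (ω * discreteVariation k p q) +
          2 * (ρ ^ 2 / (2 * r) + ω) * discreteVariation k p q := by gcongr
    _ = ω ^ 2 + (ρ ^ 2 / r + 4 * ω) * discreteVariation k p q := by
        field_simp
        ring

/-- The radii `ρ` of a path window and `ω` of its driver window are small enough, relative to the
constants of the reflection, for the a priori bound `ρ` on the path to improve to `ρ / 2`. -/
structure IsSmall (r δ c ρ ω : ℝ) : Prop where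
  r_pos : 0 < r
  c_pos : 0 < c
  ρ_pos : 0 < ρ
  ω_pos : 0 < ω
  ρ_le_δ : ρ ≤ δ / 4
  ρ_le_r : ρ ≤ c * r / 16
  ω_le_ρ : ω ≤ ρ / 8
  ω_le_c : ω ≤ c * ρ / 128

lemma IsSmall.exists_le (hr : 0 < r) (hδ : 0 < δ) (hc : 0 < c) {ε : ℝ} (hε : 0 < ε) :
    ∃ ρ ≤ ε, ∃ ω, IsSmall r δ c ρ ω := by
  set ρ := min ε (min (δ / 4) (c * r / 16))
  have hρ : 0 < ρ := by positivity
  exact ⟨ρ, min_le_left _ _, min (ρ / 8) (c * ρ / 128), hr, hc, hρ, by positivity,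
    (min_le_right _ _).trans (min_le_left _ _), (min_le_right _ _).trans (min_le_right _ _),
    min_le_left _ _, min_le_right _ _⟩

lemma IsSmall.two_mul_lt (hs : IsSmall r δ c ρ ω) : 2 * ρ < δ := by
  linarith [hs.ρ_pos, hs.ρ_le_δ]

lemma IsSmall.sq_add_mul_le (hs : IsSmall r δ c ρ ω) :
    ω ^ 2 + (ρ ^ 2 / r + 4 * ω) * ((ρ + ω) / c) ≤ (ρ / 2) ^ 2 := by
  obtain ⟨hr, hc, hρ, hω, -, hρr, hωρ, hωc⟩ := hs
  have hω_sq : ω ^ 2 ≤ (ρ / 8) ^ 2 := by gcongr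
  have hquad : ρ ^ 2 / r * ((ρ + ω) / c) ≤ ρ ^ 2 / 8 := by
    have : (ρ + ω) / (r * c) ≤ 1 / 8 := by
      rw [div_le_div_iff₀ (by positivity) (by norm_num)]
      linarith
    rw [div_mul_div_comm, mul_div_assoc, div_eq_mul_one_div (ρ ^ 2) 8]
    exact mul_le_mul_of_nonneg_left this (sq_nonneg ρ)
  have hlin : 4 * ω * ((ρ + ω) / c) ≤ ρ ^ 2 / 16 := by
    have : ω * (ρ + ω) ≤ c * ρ / 128 * (2 * ρ) := by gcongr; linarith
    rw [← mul_div_assoc, div_le_div_iff₀ hc (by norm_num)]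
    linarith
  rw [add_mul]
  linarith [sq_nonneg ρ]

lemma norm_sub_le_half (S : IsDiscreteReflection K r δ c h x k) (hs : IsSmall r δ c ρ ω)
    (hpq : p ≤ q) (hx : ∀ j ∈ Icc p q, ‖x j - x p‖ ≤ ρ)
    (hh : ∀ j ∈ Icc p q, ‖h j - h p‖ ≤ ω) : ‖x q - x p‖ ≤ ρ / 2 := by
  have hr := hs.r_pos
  have hω := hs.ω_pos
  refine le_of_sq_le_sq ?_ (half_pos hs.ρ_pos).le
  calc ‖x q - x p‖ ^ 2 ≤ ω ^ 2 + (ρ ^ 2 / r + 4 * ω) * discreteVariation k p q :=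
        S.norm_sub_sq_le hr hpq hx hh
    _ ≤ ω ^ 2 + (ρ ^ 2 / r + 4 * ω) * ((ρ + ω) / c) := by
        gcongr
        exact S.discreteVariation_le hs.c_pos hs.two_mul_lt hpq hx (hh q ⟨hpq, le_rfl⟩)
    _ ≤ (ρ / 2) ^ 2 := hs.sq_add_mul_le

lemma norm_succ_sub_le (S : IsDiscreteReflection K r δ c h x k) (j : ℕ) :
    ‖x (j + 1) - x j‖ ≤ 2 * ‖h (j + 1) - h j‖ := by
  have hsplit : x (j + 1) - x j = (k (j + 1) - k j) + (h (j + 1) - h j) := by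
    rw [S.sub_eq, sub_add_cancel]
  rw [hsplit]
  linarith [norm_add_le (k (j + 1) - k j) (h (j + 1) - h j), S.norm_step_le j]

lemma forall_norm_sub_le_half (S : IsDiscreteReflection K r δ c h x k) (hs : IsSmall r δ c ρ ω)
    (hh : ∀ j ∈ Icc p q, ‖h j - h p‖ ≤ ω) : ∀ j ∈ Icc p q, ‖x j - x p‖ ≤ ρ / 2 := by
  rintro n ⟨hpn, hnq⟩
  induction n using Nat.strong_induction_on with
  | _ n ih =>
    obtain rfl | hlt := hpn.eq_or_lt
    · simpa using (half_pos hs.ρ_pos).le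
    obtain ⟨m, rfl⟩ : ∃ m, n = m + 1 := ⟨n - 1, by omega⟩
    have hprev (j : ℕ) (hpj : p ≤ j) (hjm : j ≤ m) : ‖x j - x p‖ ≤ ρ / 2 :=
      ih j (by omega) hpj (by omega)
    have hh_step : ‖h (m + 1) - h m‖ ≤ 2 * ω := by
      rw [← sub_sub_sub_cancel_right _ _ (h p)]
      linarith [norm_sub_le (h (m + 1) - h p) (h m - h p), hh (m + 1) ⟨hpn, hnq⟩,
        hh m ⟨by omega, by omega⟩]
    have hx_last : ‖x (m + 1) - x p‖ ≤ ρ := by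
      linarith [norm_sub_le_norm_sub_add_norm_sub (x (m + 1)) (x m) (x p), S.norm_succ_sub_le m,
        hprev m (by omega) le_rfl, hs.ω_le_ρ]
    refine S.norm_sub_le_half hs hpn (fun j hj => ?_) fun j hj => hh j ⟨hj.1, hj.2.trans hnq⟩
    obtain rfl | hjm := hj.2.eq_or_lt
    · exact hx_last
    · linarith [hprev j hj.1 (by omega), hs.ρ_pos]

theorem exists_modulus (K : Set E) (hr : 0 < r) (hδ : 0 < δ) (hc : 0 < c) {ε : ℝ} (hε : 0 < ε) :
    ∃ ω > 0, ∀ (h x k : ℕ → E), IsDiscreteReflection K r δ c h x k → ∀ p q, p ≤ q →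
      (∀ j ∈ Icc p q, ‖h j - h p‖ ≤ ω) →
      (∀ j ∈ Icc p q, ‖x j - x p‖ ≤ ε) ∧ discreteVariation k p q ≤ ε := by
  obtain ⟨ρ, hρ, ω, hs⟩ := IsSmall.exists_le hr hδ hc (ε := min ε (c * ε / 2)) (by positivity)
  have hρε : ρ ≤ ε := hρ.trans (min_le_left _ _)
  have hρc : ρ ≤ c * ε / 2 := hρ.trans (min_le_right _ _)
  refine ⟨ω, hs.ω_pos, fun h x k S p q hpq hh => ?_⟩
  have hx (j : ℕ) (hj : j ∈ Icc p q) : ‖x j - x p‖ ≤ ρ :=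
    (S.forall_norm_sub_le_half hs hh j hj).trans (half_le_self hs.ρ_pos.le)
  refine ⟨fun j hj => (hx j hj).trans hρε, ?_⟩
  refine (S.discreteVariation_le hc hs.two_mul_lt hpq hx (hh q ⟨hpq, le_rfl⟩)).trans ?_
  rw [div_le_iff₀ hc]
  linarith [hs.ω_le_ρ, hs.ρ_pos]

lemma inner_add_mul_discreteVariation_nonneg (S : IsDiscreteReflection K r δ c h x k) (hr : 0 < r)
    {y z : E} (hy : y ∈ K) (hpq : p ≤ q) (hz : ∀ j ∈ Icc p q, ‖x j - z‖ ≤ η) :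
    0 ≤ ⟪y - z, k q - k p⟫ +
      ((‖y - z‖ + η) ^ 2 / (2 * r) + η) * discreteVariation k p q := by
  suffices -((‖y - z‖ + η) ^ 2 / (2 * r) + η) * discreteVariation k p q ≤ ⟪y - z, k q - k p⟫ by
    linarith
  refine mul_discreteVariation_le_inner hpq fun j hj => ?_
  have hxz : ‖x (j + 1) - z‖ ≤ η := hz (j + 1) ⟨hj.1.trans j.le_succ, hj.2⟩
  have hprox := S.proximal j y hy
  set Δ := k (j + 1) - k j
  have hinner : ⟪y - x (j + 1), Δ⟫ ≤ ⟪y - z, Δ⟫ + η * ‖Δ‖ := by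
    rw [← sub_sub_sub_cancel_right y _ z, inner_sub_left]
    have := neg_le_of_abs_le (abs_real_inner_le_norm (x (j + 1) - z) Δ)
    linarith [mul_le_mul_of_nonneg_right hxz (norm_nonneg Δ)]
  have hnorm : ‖y - x (j + 1)‖ ^ 2 / (2 * r) * ‖Δ‖ ≤ (‖y - z‖ + η) ^ 2 / (2 * r) * ‖Δ‖ := by
    gcongr
    rw [← sub_sub_sub_cancel_right y _ z]
    exact (norm_sub_le _ _).trans (by gcongr)
  linarith

end IsDiscreteReflection

section Projection

variable {d : ℕ} {D : Set (Ed d)} {r₀ δ₀ β : ℝ}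

lemma IsDiscreteReflection.of_normalize_mem_inwardNormals {h x k : ℕ → Ed d} (hA : CondA D r₀)
    (hB : CondB D δ₀ β) (decomp : ∀ j, x j = h j + k j) (mem : ∀ j, x j ∈ closure D)
    (norm_step_le : ∀ j, ‖k (j + 1) - k j‖ ≤ ‖h (j + 1) - h j‖)
    (hnormal : ∀ j, k (j + 1) ≠ k j →
      ‖k (j + 1) - k j‖⁻¹ • (k (j + 1) - k j) ∈ inwardNormals D (x (j + 1))) :
    IsDiscreteReflection (closure D) r₀ δ₀ (1 / β) h x k := by
  have hfrontier (j : ℕ) (hj : k (j + 1) ≠ k j) : x (j + 1) ∈ frontier D :=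
    mem_frontier_of_mem_inwardNormals (mem _) (hnormal j hj)
  refine ⟨decomp, mem, norm_step_le, fun j y hy => ?_, fun j hj => ?_⟩
  · obtain hj | hj := eq_or_ne (k (j + 1)) (k j)
    · simp [hj]
    have hpos : 0 < ‖k (j + 1) - k j‖ := norm_sub_pos_iff.2 hj
    have hprox := hA.inner_add_sq_div_nonneg (mem _) (hnormal j hj) hy
    rw [inner_smul_right, inv_mul_eq_div] at hprox
    have := mul_nonneg hprox hpos.le
    rwa [add_mul, div_mul_cancel₀ _ hpos.ne'] at this
  · obtain ⟨l, hl, hdir⟩ := hB.2.2 _ (hfrontier j hj)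
    refine ⟨l, hl, fun i hi => ?_⟩
    obtain hrest | hmove := eq_or_ne (k (i + 1)) (k i)
    · simp [hrest]
    have hmem : x (i + 1) ∈ Metric.ball (x (j + 1)) δ₀ ∩ frontier D :=
      ⟨mem_ball_iff_norm.2 hi, hfrontier i hmove⟩
    have hle := hdir _ hmem _ (hnormal i hmove)
    rwa [inner_smul_right, inv_mul_eq_div, le_div_iff₀ (norm_sub_pos_iff.2 hmove)] at hle

/-- The Euler scheme: follow the increments of `h` and project onto `closure D` after each step. -/
theorem exists_isDiscreteReflection (hA : CondA D r₀) (hB : CondB D δ₀ β)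
    (h : ℕ → Ed d) (h0 : h 0 ∈ closure D) :
    ∃ x k : ℕ → Ed d, k 0 = 0 ∧ IsDiscreteReflection (closure D) r₀ δ₀ (1 / β) h x k := by
  choose P hP_mem hP_dist using fun z : Ed d =>
    isClosed_closure.exists_infDist_eq_dist ⟨h 0, h0⟩ z
  let x : ℕ → Ed d := Nat.rec (h 0) fun j v => P (v + (h (j + 1) - h j))
  have hx_mem : ∀ j, x j ∈ closure D
    | 0 => h0
    | _ + 1 => hP_mem _
  have hk_step (j : ℕ) : x (j + 1) - h (j + 1) - (x j - h j) =
      x (j + 1) - (x j + (h (j + 1) - h j)) := by abel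
  have hdist (j : ℕ) : Metric.infDist (x j + (h (j + 1) - h j)) (closure D) =
      dist (x j + (h (j + 1) - h j)) (x (j + 1)) := hP_dist _
  refine ⟨x, fun j => x j - h j, sub_self _, .of_normalize_mem_inwardNormals hA hB
    (fun j => (add_sub_cancel _ _).symm) hx_mem (fun j => ?_) fun j hj => ?_⟩
  · rw [hk_step, ← dist_eq_norm, dist_comm, ← hdist]
    exact (Metric.infDist_le_dist_of_mem (hx_mem j)).trans_eq (dist_self_add_left _ _)
  · rw [← sub_ne_zero, hk_step] at hj
    rw [hk_step]
    exact normalize_mem_inwardNormals_of_infDist_eq_dist (hdist j) hj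

end Projection

/-! ### Passage to the limit -/

open Filter Topology

/-- The increments of `k` are bounded by those of the (then monotone) function `V`. -/
def DominatedBy {E : Type*} [NormedAddCommGroup E] (k : ℝ → E) (V : ℝ → ℝ) : Prop :=
  ∀ ⦃s t : ℝ⦄, s ≤ t → ‖k t - k s‖ ≤ V t - V s

namespace DominatedBy

variable {E : Type*} [NormedAddCommGroup E] {k : ℝ → E} {V : ℝ → ℝ}

lemma monotone (hk : DominatedBy k V) : Monotone V := fun _ _ hst =>
  sub_nonneg.1 ((norm_nonneg _).trans (hk hst))

lemma dist_le (hk : DominatedBy k V) (s t : ℝ) : dist (k s) (k t) ≤ dist (V s) (V t) := by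
  wlog hst : s ≤ t generalizing s t
  · rw [dist_comm, dist_comm (V s)]
    exact this t s (le_of_not_ge hst)
  rw [dist_comm, dist_eq_norm, dist_comm, Real.dist_eq]
  exact (hk hst).trans (le_abs_self _)

lemma continuousWithinAt (hk : DominatedBy k V) {S : Set ℝ} {t : ℝ}
    (hV : ContinuousWithinAt V S t) : ContinuousWithinAt k S t :=
  tendsto_iff_dist_tendsto_zero.2 <| squeeze_zero (fun _ => dist_nonneg)
    (fun s => hk.dist_le s t) (tendsto_iff_dist_tendsto_zero.1 hV)

lemma continuous (hk : DominatedBy k V) (hV : Continuous V) : Continuous k :=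
  continuous_iff_continuousAt.2 fun _ =>
    (continuousWithinAt_univ _ _).1 (hk.continuousWithinAt hV.continuousWithinAt)

end DominatedBy

/-- A continuous path `x` in `K` with correction `k`, whose increments over the shrinking intervals
`[u - ε, u + ε]` are asymptotically proximal normals to `K` of radius `r` at `x u`, of size at most
the increments of `V`. -/
structure IsProximalReflection {E : Type*} [NormedAddCommGroup E] [InnerProductSpace ℝ E]
    (K : Set E) (r : ℝ) (x k : ℝ → E) (V : ℝ → ℝ) : Prop where
  continuous_bound : Continuous V
  dominatedBy : DominatedBy k V
  mem : ∀ t, x t ∈ K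
  proximal : ∀ u, ∀ η > 0, ∀ᶠ ε in 𝓝[>] (0 : ℝ), ∀ y ∈ K,
    0 ≤ ⟪y - x u, k (u + ε) - k (u - ε)⟫ +
      ((‖y - x u‖ + η) ^ 2 / (2 * r) + η) * (V (u + ε) - V (u - ε))

section Grid

/-- The index of the last point of the grid `ℕ / (N + 1)` which is at most `max t 0`. -/
def gridIndex (N : ℕ) (t : ℝ) : ℕ := ⌊max t 0 * (N + 1)⌋₊

lemma gridIndex_mono (N : ℕ) : Monotone (gridIndex N) := fun s t hst => by
  unfold gridIndex
  gcongr

lemma gridIndex_of_nonpos (N : ℕ) {t : ℝ} (ht : t ≤ 0) : gridIndex N t = 0 := by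
  simp [gridIndex, max_eq_right ht]

lemma gridIndex_div_le (N : ℕ) (t : ℝ) : (gridIndex N t : ℝ) / (N + 1) ≤ max t 0 := by
  rw [div_le_iff₀ (by positivity)]
  exact Nat.floor_le (by positivity)

lemma sub_le_gridIndex_div (N : ℕ) (t : ℝ) :
    max t 0 - 1 / (N + 1) ≤ (gridIndex N t : ℝ) / (N + 1) := by
  rw [sub_le_iff_le_add, ← add_div, le_div_iff₀ (by positivity)]
  exact (Nat.lt_floor_add_one _).le

lemma tendsto_gridIndex_div (t : ℝ) :
    Tendsto (fun N : ℕ => (gridIndex N t : ℝ) / (N + 1)) atTop (𝓝 (max t 0)) := by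
  have hlower : Tendsto (fun N : ℕ => max t 0 - 1 / ((N : ℝ) + 1)) atTop (𝓝 (max t 0)) := by
    simpa using tendsto_one_div_add_atTop_nhds_zero_nat.const_sub (max t 0)
  exact tendsto_of_tendsto_of_tendsto_of_le_of_le hlower tendsto_const_nhds
    (fun N => sub_le_gridIndex_div N t) fun N => gridIndex_div_le N t

end Grid

/-- For every `N`, the pair `(X N, κ N)` is a discrete reflection started at `h 0` and driven by the
values of `h` on the grid `ℕ / (N + 1)`. -/
structure IsEulerScheme {E : Type*} [NormedAddCommGroup E] [InnerProductSpace ℝ E]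
    (K : Set E) (r δ c : ℝ) (h : ℝ → E) (X κ : ℕ → ℕ → E) : Prop where
  zero : ∀ N, κ N 0 = 0
  reflection : ∀ N : ℕ, IsDiscreteReflection K r δ c (fun j : ℕ => h (j / (N + 1))) (X N) (κ N)

lemma exists_tendsto_of_eventually_norm_le {E ι : Type*} [NormedAddCommGroup E] [ProperSpace E]
    (F : Ultrafilter ι) {f : ι → E} {B : ℝ} (hf : ∀ᶠ i in F, ‖f i‖ ≤ B) :
    ∃ v, Tendsto f F (𝓝 v) := by
  obtain ⟨v, -, hv⟩ := (isCompact_closedBall (0 : E) B).ultrafilter_le_nhds (F.map f)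
    (le_principal_iff.2 (hf.mono fun i hi => mem_closedBall_zero_iff.2 hi))
  exact ⟨v, hv⟩

namespace IsEulerScheme

variable {E : Type*} [NormedAddCommGroup E] [InnerProductSpace ℝ E] {K : Set E} {r δ c : ℝ}
  {h : ℝ → E} {X κ : ℕ → ℕ → E}

theorem exists_modulus (S : IsEulerScheme K r δ c h X κ) (hr : 0 < r) (hδ : 0 < δ) (hc : 0 < c)
    (hh : ContinuousOn h (Ici 0)) (T : ℝ) {ε : ℝ} (hε : 0 < ε) :
    ∃ τ > 0, ∀ᶠ N : ℕ in atTop, ∀ s t : ℝ, s ≤ t → t ≤ T → t - s ≤ τ →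
      (∀ j ∈ Icc (gridIndex N s) (gridIndex N t), ‖X N j - X N (gridIndex N s)‖ ≤ ε) ∧
      discreteVariation (κ N) (gridIndex N s) (gridIndex N t) ≤ ε := by
  obtain ⟨ω, hω, hmod⟩ := IsDiscreteReflection.exists_modulus K hr hδ hc hε
  obtain ⟨τ, hτ, huc⟩ := Metric.uniformContinuousOn_iff_le.1
    (isCompact_Icc.uniformContinuousOn_of_continuous
      (hh.mono (Icc_subset_Ici_self : Icc 0 (max T 0) ⊆ Ici 0))) ω hω
  have hmesh : ∀ᶠ N : ℕ in atTop, 1 / ((N : ℝ) + 1) < τ / 2 :=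
    tendsto_one_div_add_atTop_nhds_zero_nat.eventually_lt_const (half_pos hτ)
  refine ⟨τ / 2, half_pos hτ, ?_⟩
  filter_upwards [hmesh] with N hN s t hst htT hlen
  refine hmod _ _ _ (S.reflection N) _ _ (gridIndex_mono N hst) fun j ⟨hsj, hjt⟩ => ?_
  have hs_le : (gridIndex N s : ℝ) / (N + 1) ≤ j / (N + 1) := by gcongr
  have hle_t : (j : ℝ) / (N + 1) ≤ gridIndex N t / (N + 1) := by gcongr
  have hs_nonneg : 0 ≤ (gridIndex N s : ℝ) / (N + 1) := by positivity
  have hT : max t 0 ≤ max T 0 := by gcongr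
  have hmax : max t 0 - max s 0 ≤ t - s := by
    simpa [abs_of_nonneg, hst] using (le_abs_self _).trans (abs_max_sub_max_le_abs t s 0)
  have := gridIndex_div_le N t
  have := sub_le_gridIndex_div N s
  rw [← dist_eq_norm]
  refine huc _ ⟨by linarith, by linarith⟩ _ ⟨hs_nonneg, by linarith⟩ ?_
  rw [Real.dist_eq, abs_of_nonneg (by linarith)]
  linarith

lemma exists_eventually_discreteVariation_le (S : IsEulerScheme K r δ c h X κ) (hr : 0 < r)
    (hδ : 0 < δ) (hc : 0 < c) (hh : ContinuousOn h (Ici 0)) (T : ℝ) :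
    ∃ B : ℝ, ∀ᶠ N in atTop, discreteVariation (κ N) 0 (gridIndex N T) ≤ B := by
  obtain ⟨τ, hτ, hmod⟩ := S.exists_modulus hr hδ hc hh T one_pos
  obtain ⟨m, hm⟩ := exists_nat_ge (T / τ)
  refine ⟨m, ?_⟩
  filter_upwards [hmod] with N hN
  suffices ∀ n : ℕ, ∀ t ≤ T, t ≤ n * τ → discreteVariation (κ N) 0 (gridIndex N t) ≤ n from
    this m T le_rfl ((div_le_iff₀ hτ).1 hm)
  intro n
  induction n with
  | zero =>
    intro t _ ht
    simp [gridIndex_of_nonpos N (by simpa using ht : t ≤ 0), discreteVariation]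
  | succ n ih =>
    intro t htT ht
    push_cast at ht ⊢
    rw [← discreteVariation_add (κ N) (Nat.zero_le _)
      (gridIndex_mono N (by linarith : t - τ ≤ t))]
    linarith [ih (t - τ) (by linarith) (by linarith),
      (hN (t - τ) t (by linarith) htT (by linarith)).2]

lemma tendsto_path (S : IsEulerScheme K r δ c h X κ) (hh : ContinuousOn h (Ici 0)) {k : ℝ → E}
    {F : Filter ℕ} (hF : F ≤ atTop) {t : ℝ}
    (hk : Tendsto (fun N => κ N (gridIndex N t)) F (𝓝 (k t))) :
    Tendsto (fun N => X N (gridIndex N t)) F (𝓝 (h (max t 0) + k t)) := by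
  have htime : Tendsto (fun N : ℕ => (gridIndex N t : ℝ) / (N + 1)) F (𝓝[Ici 0] (max t 0)) :=
    tendsto_nhdsWithin_iff.2 ⟨(tendsto_gridIndex_div t).mono_left hF,
      .of_forall fun N => mem_Ici.2 (by positivity)⟩
  exact (((hh (max t 0) (mem_Ici.2 (le_max_right _ _))).tendsto.comp htime).add hk).congr
    fun N => ((S.reflection N).decomp _).symm

lemma proximal_of_tendsto (S : IsEulerScheme K r δ c h X κ) (hr : 0 < r) (hδ : 0 < δ) (hc : 0 < c)
    (hh : ContinuousOn h (Ici 0)) {x k : ℝ → E} {V : ℝ → ℝ} {F : Filter ℕ} [F.NeBot]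
    (hF : F ≤ atTop) (hx : ∀ t, Tendsto (fun N => X N (gridIndex N t)) F (𝓝 (x t)))
    (hk : ∀ t, Tendsto (fun N => κ N (gridIndex N t)) F (𝓝 (k t)))
    (hV : ∀ t, Tendsto (fun N => discreteVariation (κ N) 0 (gridIndex N t)) F (𝓝 (V t)))
    (u : ℝ) {η : ℝ} (hη : 0 < η) :
    ∀ᶠ ε in 𝓝[>] (0 : ℝ), ∀ y ∈ K, 0 ≤ ⟪y - x u, k (u + ε) - k (u - ε)⟫ +
      ((‖y - x u‖ + η) ^ 2 / (2 * r) + η) * (V (u + ε) - V (u - ε)) := by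
  obtain ⟨τ, hτ, hmod⟩ := S.exists_modulus hr hδ hc hh (u + 1) (half_pos hη)
  have hsmall : Ioo (0 : ℝ) (min 1 (τ / 2)) ∈ 𝓝[>] 0 := Ioo_mem_nhdsGT (by positivity)
  filter_upwards [hsmall] with ε ⟨hε, hε_lt⟩ y hy
  obtain ⟨hε_one, hε_τ⟩ := lt_min_iff.1 hε_lt
  have hdiff : Tendsto (fun N => y - X N (gridIndex N u)) F (𝓝 (y - x u)) := (hx u).const_sub y
  refine ge_of_tendsto ((hdiff.inner (𝕜 := ℝ) ((hk (u + ε)).sub (hk (u - ε)))).add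
    (((((hdiff.norm.add_const η).pow 2).div_const (2 * r)).add_const η).mul
      ((hV (u + ε)).sub (hV (u - ε))))) (hF ?_)
  filter_upwards [hmod] with N hN
  have hleft : gridIndex N (u - ε) ≤ gridIndex N u := gridIndex_mono N (by linarith)
  have hright : gridIndex N u ≤ gridIndex N (u + ε) := gridIndex_mono N (by linarith)
  have hwindow := (hN (u - ε) (u + ε) (by linarith) (by linarith) (by linarith)).1
  have hclose (j : ℕ) (hj : j ∈ Icc (gridIndex N (u - ε)) (gridIndex N (u + ε))) :
      ‖X N j - X N (gridIndex N u)‖ ≤ η := by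
    rw [← sub_sub_sub_cancel_right _ _ (X N (gridIndex N (u - ε)))]
    exact (norm_sub_le_of_le (hwindow j hj) (hwindow _ ⟨hleft, hright⟩)).trans_eq (add_halves η)
  rw [← discreteVariation_add (κ N) (Nat.zero_le _) (hleft.trans hright), add_sub_cancel_left]
  exact (S.reflection N).inner_add_mul_discreteVariation_nonneg hr hy (hleft.trans hright) hclose

lemma continuous_of_tendsto (S : IsEulerScheme K r δ c h X κ) (hr : 0 < r) (hδ : 0 < δ)
    (hc : 0 < c) (hh : ContinuousOn h (Ici 0)) {V : ℝ → ℝ} {F : Filter ℕ} [F.NeBot]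
    (hF : F ≤ atTop) (hV_mono : Monotone V)
    (hV : ∀ t, Tendsto (fun N => discreteVariation (κ N) 0 (gridIndex N t)) F (𝓝 (V t))) :
    Continuous V := by
  have hmod (T ε : ℝ) (hε : 0 < ε) : ∃ τ > 0, ∀ s t : ℝ, s ≤ t → t ≤ T → t - s ≤ τ →
      V t - V s ≤ ε := by
    obtain ⟨τ, hτ, hev⟩ := S.exists_modulus hr hδ hc hh T hε
    refine ⟨τ, hτ, fun s t hst htT hlen => le_of_tendsto ((hV t).sub (hV s)) (hF ?_)⟩
    filter_upwards [hev] with N hN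
    rw [← discreteVariation_add (κ N) (Nat.zero_le _) (gridIndex_mono N hst), add_sub_cancel_left]
    exact (hN s t hst htT hlen).2
  refine Metric.continuous_iff'.2 fun u ε hε => ?_
  obtain ⟨τ, hτ, hτ_mod⟩ := hmod (u + 1) (ε / 2) (half_pos hε)
  filter_upwards [Metric.ball_mem_nhds u (by positivity : 0 < min τ 1)] with t ht
  rw [Metric.mem_ball, Real.dist_eq, lt_min_iff, abs_lt, abs_lt] at ht
  rw [Real.dist_eq, abs_lt]
  obtain hut | htu := le_total u t
  · constructor <;> linarith [hτ_mod u t hut (by linarith) (by linarith), hV_mono hut]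
  · constructor <;> linarith [hτ_mod t u htu (by linarith) (by linarith), hV_mono htu]

theorem exists_isProximalReflection [ProperSpace E] (S : IsEulerScheme K r δ c h X κ)
    (hK : IsClosed K) (hr : 0 < r) (hδ : 0 < δ) (hc : 0 < c) (hh : ContinuousOn h (Ici 0)) :
    ∃ (k : ℝ → E) (V : ℝ → ℝ), k 0 = 0 ∧
      IsProximalReflection K r (fun t => h (max t 0) + k t) k V := by
  let F : Ultrafilter ℕ := Ultrafilter.of atTop
  have hF : (F : Filter ℕ) ≤ atTop := Ultrafilter.of_le _
  have hbound := S.exists_eventually_discreteVariation_le hr hδ hc hh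
  have hk_norm (N : ℕ) (t : ℝ) :
      ‖κ N (gridIndex N t)‖ ≤ discreteVariation (κ N) 0 (gridIndex N t) := by
    simpa [S.zero N] using norm_sub_le_discreteVariation (κ N) (Nat.zero_le (gridIndex N t))
  have hk_lim (t : ℝ) : ∃ v, Tendsto (fun N => κ N (gridIndex N t)) F (𝓝 v) := by
    obtain ⟨B, hB⟩ := hbound t
    exact exists_tendsto_of_eventually_norm_le F <|
      (hB.filter_mono hF).mono fun N hN => (hk_norm N t).trans hN
  have hV_lim (t : ℝ) :
      ∃ v, Tendsto (fun N => discreteVariation (κ N) 0 (gridIndex N t)) F (𝓝 v) := by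
    obtain ⟨B, hB⟩ := hbound t
    refine exists_tendsto_of_eventually_norm_le (B := B) F <|
      (hB.filter_mono hF).mono fun N hN => ?_
    rwa [Real.norm_of_nonneg (discreteVariation_nonneg _ _ _)]
  choose k hk using hk_lim
  choose V hV using hV_lim
  have hx (t : ℝ) := S.tendsto_path hh hF (hk t)
  have hdom : DominatedBy k V := fun s t hst =>
    le_of_tendsto_of_tendsto' ((hk t).sub (hk s)).norm ((hV t).sub (hV s)) fun N => by
      rw [← discreteVariation_add (κ N) (Nat.zero_le _) (gridIndex_mono N hst),
        add_sub_cancel_left]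
      exact norm_sub_le_discreteVariation _ (gridIndex_mono N hst)
  refine ⟨k, V, ?_, S.continuous_of_tendsto hr hδ hc hh hF hdom.monotone hV, hdom,
    fun t => hK.mem_of_tendsto (hx t) (.of_forall fun N => (S.reflection N).mem _),
    fun u η hη => S.proximal_of_tendsto hr hδ hc hh hF hx hk hV u hη⟩
  refine tendsto_nhds_unique (hk 0) (tendsto_const_nhds.congr fun N => ?_)
  rw [gridIndex_of_nonpos N le_rfl, S.zero]

end IsEulerScheme

theorem exists_isEulerScheme {d : ℕ} {D : Set (Ed d)} {r₀ δ₀ β : ℝ} (hA : CondA D r₀)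
    (hB : CondB D δ₀ β) {h : ℝ → Ed d} (h0 : h 0 ∈ closure D) :
    ∃ X κ, IsEulerScheme (closure D) r₀ δ₀ (1 / β) h X κ := by
  choose X κ hzero hrefl using fun N : ℕ =>
    exists_isDiscreteReflection hA hB (fun j : ℕ => h (j / (N + 1))) (by simpa using h0)
  exact ⟨X, κ, hzero, hrefl⟩

/-! ### Densities with respect to a Stieltjes measure -/

/-- `n` is a density `dk / dW` of the path `k` with respect to the Stieltjes measure of `W`. -/
structure IsDensity {E : Type*} [NormedAddCommGroup E] [NormedSpace ℝ E] [MeasurableSpace E]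
    (W : StieltjesFunction ℝ) (k n : ℝ → E) : Prop where
  measurable : Measurable n
  integrableOn_Ioc : ∀ s t, IntegrableOn n (Ioc s t) W.measure
  sub_eq_setIntegral : ∀ ⦃s t⦄, s ≤ t → k t - k s = ∫ u in Ioc s t, n u ∂W.measure

/-- `W` is a continuous primitive of the total variation of `k`. -/
structure IsVariationOf {E : Type*} [PseudoEMetricSpace E]
    (W : StieltjesFunction ℝ) (k : ℝ → E) : Prop where
  continuous : Continuous W
  eVariationOn_Icc : ∀ ⦃s t⦄, s ≤ t → eVariationOn k (Icc s t) = ENNReal.ofReal (W t - W s)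

section StieltjesDensity

variable {E : Type*} [NormedAddCommGroup E] {W : StieltjesFunction ℝ}

lemma measure_Icc_of_continuous (hW : Continuous W) (s t : ℝ) :
    W.measure (Icc s t) = ENNReal.ofReal (W t - W s) := by
  rw [StieltjesFunction.measure_Icc, hW.continuousWithinAt.leftLim_eq]

lemma nullSingletonClass_of_continuous (hW : Continuous W) : NullSingletonClass W.measure :=
  ⟨fun t => by simp [← Icc_self, measure_Icc_of_continuous hW]⟩

lemma ae_exists_tendsto_quotient {V : StieltjesFunction ℝ} (hV : Continuous V)
    (hW : Continuous W) : ∀ᵐ u ∂W.measure, ∃ c, Tendsto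
      (fun ε => (W (u + ε) - W (u - ε))⁻¹ * (V (u + ε) - V (u - ε))) (𝓝[>] 0) (𝓝 c) := by
  filter_upwards [Besicovitch.ae_tendsto_rnDeriv V.measure W.measure,
    Measure.rnDeriv_lt_top V.measure W.measure] with u hu hlt
  refine ⟨_, ((ENNReal.tendsto_toReal hlt.ne).comp hu).congr' ?_⟩
  filter_upwards [self_mem_nhdsWithin] with ε (hε : 0 < ε)
  have hle : u - ε ≤ u + ε := by linarith
  rw [Function.comp_apply, Real.closedBall_eq_Icc, measure_Icc_of_continuous hW,
    measure_Icc_of_continuous hV, ENNReal.toReal_div, ENNReal.toReal_ofReal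
      (sub_nonneg.2 (W.mono hle)), ENNReal.toReal_ofReal (sub_nonneg.2 (V.mono hle)),
    inv_mul_eq_div]

lemma isDensity_one (W : StieltjesFunction ℝ) : IsDensity W W (fun _ => (1 : ℝ)) where
  measurable := measurable_const
  integrableOn_Ioc _ _ := integrableOn_const measure_Ioc_lt_top.ne
  sub_eq_setIntegral s t hst := by
    rw [setIntegral_const, measureReal_def, StieltjesFunction.measure_Ioc,
      ENNReal.toReal_ofReal (sub_nonneg.2 (W.mono hst)), smul_eq_mul, mul_one]

lemma DominatedBy.eVariationOn_Icc_le {k : ℝ → E} {V : ℝ → ℝ} (hk : DominatedBy k V) (s t : ℝ) :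
    eVariationOn k (Icc s t) ≤ ENNReal.ofReal (V t - V s) := by
  calc eVariationOn k (Icc s t) ≤ eVariationOn V (univ ∩ Icc s t) := by
        rw [univ_inter]
        refine iSup_mono fun p => Finset.sum_le_sum fun i _ => ?_
        simp only [edist_dist]
        exact ENNReal.ofReal_le_ofReal (hk.dist_le _ _)
    _ = ENNReal.ofReal (V t - V s) :=
        (hk.monotone.monotoneOn _).eVariationOn_eq (mem_univ _) (mem_univ _)

lemma DominatedBy.exists_isVariationOf {k : ℝ → E} {V : ℝ → ℝ} (hk : DominatedBy k V)
    (hV : Continuous V) : ∃ W : StieltjesFunction ℝ, IsVariationOf W k := by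
  have hfin (s t : ℝ) : eVariationOn k (Icc s t) ≠ ⊤ :=
    ((hk.eVariationOn_Icc_le s t).trans_lt ENNReal.ofReal_lt_top).ne
  have hbv : LocallyBoundedVariationOn k univ := fun s t _ _ => by
    simpa only [BoundedVariationOn, univ_inter] using hfin s t
  have hsub ⦃s t : ℝ⦄ (hst : s ≤ t) : variationOnFromTo k univ 0 t - variationOnFromTo k univ 0 s =
      (eVariationOn k (Icc s t)).toReal := by
    rw [variationOnFromTo.sub_right hbv (mem_univ _) (mem_univ _) (mem_univ _),
      variationOnFromTo.eq_of_le _ _ hst, univ_inter]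
  have hle : DominatedBy (variationOnFromTo k univ 0) V := fun s t hst => by
    rw [hsub hst, Real.norm_of_nonneg ENNReal.toReal_nonneg]
    exact ENNReal.toReal_le_of_le_ofReal (sub_nonneg.2 (hk.monotone hst))
      (hk.eVariationOn_Icc_le s t)
  have hcont := hle.continuous hV
  have hmono := monotoneOn_univ.1 (variationOnFromTo.monotoneOn hbv (mem_univ 0))
  exact ⟨⟨_, hmono, fun t => hcont.continuousWithinAt⟩, hcont, fun s t hst =>
    (ENNReal.ofReal_toReal (hfin s t)).symm.trans (congrArg _ (hsub hst).symm)⟩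

namespace IsVariationOf

variable {k : ℝ → E}

lemma dominatedBy (hW : IsVariationOf W k) : DominatedBy k W := fun s t hst => by
  rw [← ENNReal.ofReal_le_ofReal_iff (sub_nonneg.2 (W.mono hst)), ← hW.eVariationOn_Icc hst,
    ← dist_eq_norm, ← edist_dist]
  exact eVariationOn.edist_le k (right_mem_Icc.2 hst) (left_mem_Icc.2 hst)

lemma sub_le_sub_of_dominatedBy (hW : IsVariationOf W k) {V : ℝ → ℝ} (hk : DominatedBy k V)
    {s t : ℝ} (hst : s ≤ t) : W t - W s ≤ V t - V s := by
  rw [← ENNReal.ofReal_le_ofReal_iff (sub_nonneg.2 (hk.monotone hst)), ← hW.eVariationOn_Icc hst]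
  exact hk.eVariationOn_Icc_le s t

end IsVariationOf

lemma DominatedBy.exists_isDensity_real {f : ℝ → ℝ} (hf : DominatedBy f W) :
    ∃ g : ℝ → ℝ, IsDensity W f g := by
  have hfabs ⦃s t : ℝ⦄ (hst : s ≤ t) := abs_le.1 (hf hst)
  have hfcont (t : ℝ) := hf.continuousWithinAt (W.right_continuous t)
  let F : StieltjesFunction ℝ := ⟨fun t => W t + f t, fun s t hst => by
    linarith [(hfabs hst).1], fun t => (W.right_continuous t).add (hfcont t)⟩
  let G : StieltjesFunction ℝ := ⟨fun t => W t - f t, fun s t hst => by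
    linarith [(hfabs hst).2], fun t => (W.right_continuous t).sub (hfcont t)⟩
  have hFG : F.measure + G.measure = W.measure + W.measure := by
    rw [← StieltjesFunction.measure_add, ← StieltjesFunction.measure_add]
    congr 1
    ext t
    change (W t + f t) + (W t - f t) = W t + W t
    ring
  have hac : F.measure ≪ W.measure := by
    intro s hs
    have := congrArg (fun m : Measure ℝ => m s) hFG
    simp only [Measure.add_apply, hs, add_zero] at this
    exact (add_eq_zero.1 this).1
  have hF (s t : ℝ) :
      IntegrableOn (fun u => (F.measure.rnDeriv W.measure u).toReal) (Ioc s t) W.measure :=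
    Measure.integrableOn_toReal_rnDeriv measure_Ioc_lt_top.ne
  have hone := isDensity_one W
  refine ⟨fun u => (F.measure.rnDeriv W.measure u).toReal - 1,
    (Measure.measurable_rnDeriv _ _).ennreal_toReal.sub_const _,
    fun s t => (hF s t).sub (hone.integrableOn_Ioc s t), fun s t hst => ?_⟩
  rw [integral_sub (hF s t) (hone.integrableOn_Ioc s t), ← hone.sub_eq_setIntegral hst,
    Measure.setIntegral_toReal_rnDeriv hac, measureReal_def, StieltjesFunction.measure_Ioc,
    ENNReal.toReal_ofReal (sub_nonneg.2 (F.mono hst))]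
  change f t - f s = (W t + f t) - (W s + f s) - (W t - W s)
  ring

lemma DominatedBy.exists_isDensity [InnerProductSpace ℝ E] [FiniteDimensional ℝ E]
    [MeasurableSpace E] [BorelSpace E] {k : ℝ → E} (hk : DominatedBy k W) :
    ∃ n : ℝ → E, IsDensity W k n := by
  let b := stdOrthonormalBasis ℝ E
  have hcoord (i) : DominatedBy (fun t => ⟪b i, k t⟫) W := fun s t hst => by
    rw [← inner_sub_right]
    refine ((norm_inner_le_norm _ _).trans_eq ?_).trans (hk hst)
    rw [b.norm_eq_one, one_mul]
  choose g hg using fun i => (hcoord i).exists_isDensity_real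
  have hint (i) (s t : ℝ) : IntegrableOn (fun u => g i u • b i) (Ioc s t) W.measure :=
    ((hg i).integrableOn_Ioc s t).smul_const _
  refine ⟨fun u => ∑ i, g i u • b i,
    Finset.measurable_sum _ fun i _ => (hg i).measurable.smul_const _,
    fun s t => integrable_finsetSum _ fun i _ => hint i s t, fun s t hst => ?_⟩
  rw [integral_finsetSum _ fun i _ => hint i s t]
  simp_rw [integral_smul_const, ← (hg _).sub_eq_setIntegral hst, ← inner_sub_right]
  exact (b.sum_repr' _).symm

namespace IsDensity

variable [NormedSpace ℝ E] [MeasurableSpace E] {k n : ℝ → E}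

lemma locallyIntegrable (hn : IsDensity W k n) : LocallyIntegrable n W.measure := fun t =>
  ⟨_, Ioc_mem_nhds (sub_one_lt t) (lt_add_one t), hn.integrableOn_Ioc _ _⟩

lemma norm_primitive [OpensMeasurableSpace E] (hn : IsDensity W k n) :
    IsDensity W (fun t => ∫ u in (0)..t, ‖n u‖ ∂W.measure) (fun u => ‖n u‖) where
  measurable := hn.measurable.norm
  integrableOn_Ioc s t := (hn.integrableOn_Ioc s t).norm
  sub_eq_setIntegral s t hst := by
    have hint (s t : ℝ) : IntervalIntegrable (fun u => ‖n u‖) W.measure s t :=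
      ⟨(hn.integrableOn_Ioc _ _).norm, (hn.integrableOn_Ioc _ _).norm⟩
    rw [intervalIntegral.integral_interval_sub_left (hint 0 t) (hint 0 s),
      intervalIntegral.integral_of_le hst]

lemma ae_tendsto_quotient [CompleteSpace E] (hn : IsDensity W k n) (hW : Continuous W) :
    ∀ᵐ u ∂W.measure, Tendsto
      (fun ε => (W (u + ε) - W (u - ε))⁻¹ • (k (u + ε) - k (u - ε))) (𝓝[>] 0) (𝓝 (n u)) := by
  have := nullSingletonClass_of_continuous hW
  filter_upwards [(Besicovitch.vitaliFamily W.measure).ae_tendsto_average hn.locallyIntegrable]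
    with u hu
  refine (hu.comp (Besicovitch.tendsto_filterAt W.measure u)).congr' ?_
  filter_upwards [self_mem_nhdsWithin] with ε (hε : 0 < ε)
  have hle : u - ε ≤ u + ε := by linarith
  rw [Function.comp_apply, setAverage_eq, Real.closedBall_eq_Icc, integral_Icc_eq_integral_Ioc,
    ← hn.sub_eq_setIntegral hle, measureReal_def, measure_Icc_of_continuous hW,
    ENNReal.toReal_ofReal (sub_nonneg.2 (W.mono hle))]

lemma ae_norm_le_one [CompleteSpace E] (hn : IsDensity W k n) (hW : Continuous W)
    (hk : DominatedBy k W) : ∀ᵐ u ∂W.measure, ‖n u‖ ≤ 1 := by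
  filter_upwards [hn.ae_tendsto_quotient hW] with u hu
  refine le_of_tendsto hu.norm ?_
  filter_upwards [self_mem_nhdsWithin] with ε (hε : 0 < ε)
  have hle : u - ε ≤ u + ε := by linarith
  rw [norm_smul, norm_inv, Real.norm_of_nonneg (sub_nonneg.2 (W.mono hle)), inv_mul_eq_div]
  exact div_le_one_of_le₀ (hk hle) (sub_nonneg.2 (W.mono hle))

lemma ae_one_le_norm [OpensMeasurableSpace E] (hn : IsDensity W k n) (hW : IsVariationOf W k) :
    ∀ᵐ u ∂W.measure, 1 ≤ ‖n u‖ := by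
  have hQ := hn.norm_primitive
  have hkQ : DominatedBy k _ := fun s t hst => by
    rw [hQ.sub_eq_setIntegral hst, hn.sub_eq_setIntegral hst]
    exact norm_integral_le_integral_norm _
  filter_upwards [hQ.ae_tendsto_quotient hW.continuous,
    (isDensity_one W).ae_tendsto_quotient hW.continuous] with u hQu honeu
  refine le_of_tendsto_of_tendsto honeu hQu ?_
  filter_upwards [self_mem_nhdsWithin] with ε (hε : 0 < ε)
  have hle : u - ε ≤ u + ε := by linarith
  exact mul_le_mul_of_nonneg_left (hW.sub_le_sub_of_dominatedBy hkQ hle)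
    (inv_nonneg.2 (sub_nonneg.2 (W.mono hle)))

end IsDensity

end StieltjesDensity

/-! ### Existence -/

section Existence

variable {E : Type*} [NormedAddCommGroup E] [InnerProductSpace ℝ E] {K : Set E} {r : ℝ}
  {x k : ℝ → E} {V : ℝ → ℝ}

lemma IsProximalReflection.inner_add_mul_sq_nonneg_of_tendsto
    (hx : IsProximalReflection K r x k V) {u c : ℝ} {w : ℝ → ℝ} {n y : E}
    (hw : ∀ᶠ ε in 𝓝[>] 0, 0 ≤ w ε)
    (hn : Tendsto (fun ε => w ε • (k (u + ε) - k (u - ε))) (𝓝[>] 0) (𝓝 n))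
    (hc : Tendsto (fun ε => w ε * (V (u + ε) - V (u - ε))) (𝓝[>] 0) (𝓝 c)) (hy : y ∈ K) :
    0 ≤ ⟪y - x u, n⟫ + c / (2 * r) * ‖y - x u‖ ^ 2 := by
  have happrox (η : ℝ) (hη : 0 < η) :
      0 ≤ ⟪y - x u, n⟫ + ((‖y - x u‖ + η) ^ 2 / (2 * r) + η) * c := by
    refine ge_of_tendsto ((tendsto_const_nhds.inner hn).add (hc.const_mul _)) ?_
    filter_upwards [hw, hx.proximal u η hη] with ε hwε hprox
    have hscaled := mul_nonneg hwε (hprox y hy)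
    rw [inner_smul_right]
    linarith
  have hlim : Tendsto (fun η => ⟪y - x u, n⟫ + ((‖y - x u‖ + η) ^ 2 / (2 * r) + η) * c)
      (𝓝[>] 0) (𝓝 (⟪y - x u, n⟫ + ((‖y - x u‖ + 0) ^ 2 / (2 * r) + 0) * c)) :=
    (Continuous.tendsto (by fun_prop) 0).mono_left nhdsWithin_le_nhds
  calc (0 : ℝ) ≤ ⟪y - x u, n⟫ + ((‖y - x u‖ + 0) ^ 2 / (2 * r) + 0) * c :=
        ge_of_tendsto hlim (eventually_mem_nhdsWithin.mono happrox)
    _ = ⟪y - x u, n⟫ + c / (2 * r) * ‖y - x u‖ ^ 2 := by ring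

lemma IsProximalReflection.ae_exists_forall_inner_add_mul_sq_nonneg [CompleteSpace E]
    [MeasurableSpace E] (hx : IsProximalReflection K r x k V) {W : StieltjesFunction ℝ}
    (hW : Continuous W) {n : ℝ → E} (hn : IsDensity W k n) :
    ∀ᵐ u ∂W.measure, ∃ c, ∀ y ∈ K, 0 ≤ ⟪y - x u, n u⟫ + c * ‖y - x u‖ ^ 2 := by
  let V' : StieltjesFunction ℝ :=
    ⟨V, hx.dominatedBy.monotone, fun _ => hx.continuous_bound.continuousWithinAt⟩
  filter_upwards [hn.ae_tendsto_quotient hW,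
    ae_exists_tendsto_quotient (V := V') hx.continuous_bound hW] with u hnu ⟨c, hc⟩
  refine ⟨c / (2 * r), fun y hy => hx.inner_add_mul_sq_nonneg_of_tendsto ?_ hnu hc hy⟩
  filter_upwards [self_mem_nhdsWithin] with ε (hε : 0 < ε)
  exact inv_nonneg.2 (sub_nonneg.2 (W.mono (by linarith)))

end Existence

lemma IsProximalReflection.isSkorohodSolution {d : ℕ} {D : Set (Ed d)} {h x k : ℝ → Ed d}
    {V : ℝ → ℝ} {r : ℝ} (hx : IsProximalReflection (closure D) r x k V)
    (hdecomp : ∀ t, 0 ≤ t → x t = h t + k t) (hh : ContinuousOn h (Ici 0)) (hk0 : k 0 = 0)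
    (T : ℝ) : IsSkorohodSolution D h x k T := by
  obtain ⟨W, hW⟩ := hx.dominatedBy.exists_isVariationOf hx.continuous_bound
  obtain ⟨n, hn⟩ := hW.dominatedBy.exists_isDensity
  have hk := hx.dominatedBy.continuous hx.continuous_bound
  have hx0 : x 0 = h 0 := by rw [hdecomp 0 le_rfl, hk0, add_zero]
  have := nullSingletonClass_of_continuous hW.continuous
  have hnormal : ∀ᵐ u ∂W.measure, x u ∈ frontier D ∧ n u ∈ inwardNormals D (x u) := by
    filter_upwards [hx.ae_exists_forall_inner_add_mul_sq_nonneg hW.continuous hn,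
      hn.ae_norm_le_one hW.continuous hW.dominatedBy, hn.ae_one_le_norm hW] with u ⟨c, hc⟩ hle hge
    have hnu := mem_inwardNormals_of_forall_inner_add_mul_sq_nonneg (le_antisymm hle hge)
      fun y hy => hc y (subset_closure hy)
    exact ⟨mem_frontier_of_mem_inwardNormals (hx.mem u) hnu, hnu⟩
  exact
    { h0_mem := hx0 ▸ hx.mem 0
      decomp := fun t ht => hdecomp t ht.1
      cont := ((hh.mono Icc_subset_Ici_self).add hk.continuousOn).congr fun t ht => hdecomp t ht.1
      mem_closure := fun t _ => hx.mem t
      init := hx0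
      cont_k := hk.continuousOn
      k_zero := hk0
      bv := ((hx.dominatedBy.eVariationOn_Icc_le 0 T).trans_lt ENNReal.ofReal_lt_top).ne
      reflect := ⟨W.measure, n, hn.measurable,
        fun t ht => by rw [measure_Icc_of_continuous hW.continuous, hW.eVariationOn_Icc ht.1],
        fun t ht => by
          rw [integral_Icc_eq_integral_Ioc, ← hn.sub_eq_setIntegral ht.1, hk0, sub_zero],
        ae_restrict_of_ae hnormal⟩ }

theorem exists_forall_isSkorohodSolution {d : ℕ} {D : Set (Ed d)} {r₀ δ₀ β : ℝ}
    (hA : CondA D r₀) (hB : CondB D δ₀ β) {h : ℝ → Ed d} (hh : ContinuousOn h (Ici 0))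
    (h0 : h 0 ∈ closure D) : ∃ x k : ℝ → Ed d, ∀ T, IsSkorohodSolution D h x k T := by
  obtain ⟨X, κ, hX⟩ := exists_isEulerScheme hA hB h0
  obtain ⟨k, V, hk0, hx⟩ := hX.exists_isProximalReflection isClosed_closure hA.1 hB.1
    (by have := hB.2.1; positivity) hh
  exact ⟨_, k, hx.isSkorohodSolution (fun t ht => by rw [max_eq_left ht]) hh hk0⟩

/-! ### Uniqueness -/

section MeasureGronwall

variable {ρ : Measure ℝ} [IsFiniteMeasure ρ] {a b : ℝ}

lemma measureReal_Ioc_add_Ioc {s t u : ℝ} (hst : s ≤ t) (htu : t ≤ u) :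
    ρ.real (Ioc s t) + ρ.real (Ioc t u) = ρ.real (Ioc s u) := by
  rw [← Ioc_union_Ioc_eq_Ioc hst htu,
    measureReal_union (Ioc_disjoint_Ioc_of_le le_rfl) measurableSet_Ioc]

lemma tendsto_measureReal_Ioc_nhdsGT (s : ℝ) :
    Tendsto (fun t => ρ.real (Ioc s t)) (𝓝[>] s) (𝓝 0) := by
  have hlim := tendsto_measure_biInter_gt (μ := ρ) (s := Ioc s) (a := s)
    (fun _ _ => measurableSet_Ioc.nullMeasurableSet) (fun _ _ _ hij => Ioc_subset_Ioc_right hij)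
    ⟨s + 1, lt_add_one s, measure_ne_top _ _⟩
  have hempty : ⋂ t > s, Ioc s t = ∅ := by
    refine eq_empty_of_forall_notMem fun u hu => ?_
    rw [mem_iInter₂] at hu
    have hsu : s < u := (hu (s + 1) (lt_add_one s)).1
    obtain ⟨t, hst, htu⟩ := exists_between hsu
    exact htu.not_ge (hu t hst).2
  rw [hempty, measure_empty] at hlim
  exact (ENNReal.tendsto_toReal ENNReal.zero_ne_top).comp hlim

lemma sub_le_mul_measureReal_Ioc_of_local {φ : ℝ → ℝ} {C δ : ℝ} (hδ : 0 < δ)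
    (hlocal : ∀ s t, a ≤ s → s ≤ t → t ≤ b → t - s ≤ δ → φ t - φ s ≤ C * ρ.real (Ioc s t))
    (hab : a ≤ b) : φ b - φ a ≤ C * ρ.real (Ioc a b) := by
  have hsteps (N : ℕ) : ∀ t, a ≤ t → t ≤ b → t - a ≤ N * δ →
      φ t - φ a ≤ C * ρ.real (Ioc a t) := by
    induction N with
    | zero =>
      intro t hat _ hta
      obtain rfl : a = t := le_antisymm hat (by simpa using hta)
      simp
    | succ N ih =>
      intro t hat htb hta
      push_cast at hta
      rcases le_total (t - δ) a with hle | hle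
      · exact hlocal a t le_rfl hat htb (by linarith)
      · have hfirst := ih (t - δ) hle (by linarith) (by linarith)
        have hlast := hlocal (t - δ) t hle (by linarith) htb (by linarith)
        rw [← measureReal_Ioc_add_Ioc hle (by linarith), mul_add]
        linarith
  obtain ⟨N, hN⟩ := exists_nat_ge ((b - a) / δ)
  exact hsteps N b hab le_rfl ((div_le_iff₀ hδ).1 hN)

/-- On a right neighbourhood of a zero `s` where `C * ρ (s, t] < 1`, the maximum of `φ` is at most
a proper fraction of itself. -/
lemma eq_zero_of_sub_le_mul_measureReal_Ioc {φ : ℝ → ℝ} {C : ℝ} (hC : 0 ≤ C)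
    (hφ : ContinuousOn φ (Icc a b)) (hφ0 : ∀ t, 0 ≤ φ t) (hφa : φ a = 0)
    (hgrowth : ∀ s t B, a ≤ s → s ≤ t → t ≤ b → (∀ u ∈ Icc s t, φ u ≤ B) →
      φ t - φ s ≤ C * B * ρ.real (Ioc s t)) : ∀ t ∈ Icc a b, φ t = 0 := by
  refine IsClosed.Icc_subset_of_forall_exists_gt (s := {t | φ t = 0}) ?_ hφa ?_
  · rw [inter_comm]
    exact hφ.preimage_isClosed_of_isClosed isClosed_Icc isClosed_singleton
  rintro s ⟨hs : φ s = 0, has, hsb⟩ y (hy : s < y)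
  have hsmall : ∀ᶠ t in 𝓝[>] s, C * ρ.real (Ioc s t) < 1 :=
    ((tendsto_measureReal_Ioc_nhdsGT s).const_mul C).eventually_lt_const (by simp)
  obtain ⟨t, ht, hst, hty⟩ := (hsmall.and (Ioc_mem_nhdsGT (lt_min hy hsb))).exists
  have htb : t ≤ b := hty.trans (min_le_right _ _)
  obtain ⟨m, hm, hmax⟩ := isCompact_Icc.exists_isMaxOn ⟨s, left_mem_Icc.2 hst.le⟩
    (hφ.mono (Icc_subset_Icc has htb))
  have hgm := hgrowth s m (φ m) has hm.1 (hm.2.trans htb) fun u hu =>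
    hmax ⟨hu.1, hu.2.trans hm.2⟩
  have hCm : C * ρ.real (Ioc s m) < 1 :=
    (mul_le_mul_of_nonneg_left (measureReal_mono (Ioc_subset_Ioc_right hm.2)) hC).trans_lt ht
  have hφm : φ m ≤ 0 := by
    rw [hs] at hgm
    nlinarith
  exact ⟨t, le_antisymm ((hmax (right_mem_Icc.2 hst.le)).trans hφm) (hφ0 t), hst,
    hty.trans (min_le_left _ _)⟩

end MeasureGronwall

/-- The measure `ρ` controls the increments of the correction `k` of the path `x` on `[0, T]`: they
are bounded as if `k` were an integral over `ρ` of unit normals to `D` along `x`. -/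
def IsReflectionBound {d : ℕ} (D : Set (Ed d)) (x k : ℝ → Ed d) (T : ℝ) (ρ : Measure ℝ) : Prop :=
  ∀ ⦃s t⦄, 0 ≤ s → s ≤ t → t ≤ T → ∀ (v : Ed d) (c : ℝ),
    (∀ u ∈ Icc s t, ∀ n ∈ inwardNormals D (x u), ⟪v, n⟫ ≤ c) →
    ⟪v, k t - k s⟫ ≤ c * ρ.real (Ioc s t)

section SkorohodUniqueness

variable {d : ℕ} {D : Set (Ed d)} {h x k x' k' : ℝ → Ed d} {T r₀ : ℝ}

lemma IsSkorohodSolution.exists_isReflectionBound (hT : 0 ≤ T)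
    (hS : IsSkorohodSolution D h x k T) :
    ∃ ρ : Measure ℝ, IsFiniteMeasure ρ ∧ IsReflectionBound D x k T ρ := by
  obtain ⟨μ, n, hn, hμ, hk, hae⟩ := hS.reflect
  have hfin : IsFiniteMeasure (μ.restrict (Icc 0 T)) :=
    isFiniteMeasure_restrict.2 (hμ T (right_mem_Icc.2 hT) ▸ hS.bv)
  set ρ := μ.restrict (Icc 0 T) with hρ
  have hint : Integrable n ρ := .of_bound hn.aestronglyMeasurable 1 <| by
    filter_upwards [hae] with u hu using (norm_eq_one_of_mem_inwardNormals hu.2).le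
  have hkρ (t : ℝ) (ht : t ∈ Icc 0 T) : k t = ∫ u in Icc 0 t, n u ∂ρ := by
    rw [hk t ht, hρ, Measure.restrict_restrict measurableSet_Icc,
      inter_eq_left.2 (Icc_subset_Icc_right ht.2)]
  refine ⟨ρ, hfin, fun s t hs hst htT v c hc => ?_⟩
  have hsub : k t - k s = ∫ u in Ioc s t, n u ∂ρ := by
    have hdisj : Disjoint (Icc 0 s) (Ioc s t) :=
      disjoint_left.2 fun u hu hu' => hu.2.not_gt hu'.1
    rw [hkρ t ⟨hs.trans hst, htT⟩, hkρ s ⟨hs, hst.trans htT⟩, ← Icc_union_Ioc_eq_Icc hs hst,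
      setIntegral_union hdisj measurableSet_Ioc hint.integrableOn hint.integrableOn,
      add_sub_cancel_left]
  calc ⟪v, k t - k s⟫ = ∫ u in Ioc s t, ⟪v, n u⟫ ∂ρ := by
        rw [hsub, integral_inner hint.integrableOn]
    _ ≤ ∫ _ in Ioc s t, c ∂ρ := by
        refine integral_mono_ae (hint.integrableOn.const_inner v) (integrable_const c) ?_
        filter_upwards [ae_restrict_of_ae hae, ae_restrict_mem measurableSet_Ioc] with u hu hmem
        exact hc u (Ioc_subset_Icc_self hmem) _ hu.2
    _ = c * ρ.real (Ioc s t) := by rw [setIntegral_const, smul_eq_mul, mul_comm]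

lemma CondA.inner_add_le (hA : CondA D r₀) {p q n : Ed d} (hp : p ∈ closure D)
    (hn : n ∈ inwardNormals D p) (hq : q ∈ closure D) (v w : Ed d) :
    ⟪v + w, n⟫ ≤ ‖p - q‖ ^ 2 / r₀ + ‖v - (p - q)‖ + ‖w - (p - q)‖ := by
  have hcone := hA.inner_add_sq_div_nonneg hp hn hq
  have hinner (z : Ed d) : ⟪z, n⟫ ≤ ‖z‖ := by
    simpa [norm_eq_one_of_mem_inwardNormals hn] using real_inner_le_norm z n
  have hsplit : ⟪v + w, n⟫ = -(2 * ⟪q - p, n⟫) + ⟪v - (p - q), n⟫ + ⟪w - (p - q), n⟫ := by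
    simp only [inner_add_left, inner_sub_left]
    ring
  have hdouble : ‖p - q‖ ^ 2 / r₀ = 2 * (‖q - p‖ ^ 2 / (2 * r₀)) := by
    rw [norm_sub_rev]
    ring
  linarith [hinner (v - (p - q)), hinner (w - (p - q))]

lemma IsReflectionBound.inner_sub_add_sub_le {ρ : Measure ℝ} (hρ : IsReflectionBound D x k T ρ)
    (hA : CondA D r₀) {y : ℝ → Ed d} {s t B ε : ℝ} (hs : 0 ≤ s) (hst : s ≤ t) (ht : t ≤ T)
    (hx : ∀ u ∈ Icc s t, x u ∈ closure D) (hy : ∀ u ∈ Icc s t, y u ∈ closure D)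
    (hB : ∀ u ∈ Icc s t, ‖x u - y u‖ ^ 2 ≤ B)
    (hε : ∀ u ∈ Icc s t, ∀ u' ∈ Icc s t, ‖(x u - y u) - (x u' - y u')‖ ≤ ε) :
    ⟪(x t - y t) + (x s - y s), k t - k s⟫ ≤ (B / r₀ + 2 * ε) * ρ.real (Ioc s t) := by
  refine hρ hs hst ht _ _ fun u hu n hn => ?_
  have hr := hA.1
  have hBr : ‖x u - y u‖ ^ 2 / r₀ ≤ B / r₀ := by
    gcongr
    exact hB u hu
  linarith [hA.inner_add_le (hx u hu) hn (hy u hu) (x t - y t) (x s - y s),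
    hε t (right_mem_Icc.2 hst) u hu, hε s (left_mem_Icc.2 hst) u hu]

lemma IsSkorohodSolution.sub_sub_sub (hS : IsSkorohodSolution D h x k T)
    (hS' : IsSkorohodSolution D h x' k' T) {s t : ℝ} (hs : s ∈ Icc 0 T) (ht : t ∈ Icc 0 T) :
    (x t - x' t) - (x s - x' s) = (k t - k s) - (k' t - k' s) := by
  rw [hS.decomp t ht, hS.decomp s hs, hS'.decomp t ht, hS'.decomp s hs]
  abel

lemma norm_sq_sub_norm_sq_eq_inner {E : Type*} [NormedAddCommGroup E] [InnerProductSpace ℝ E]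
    (v w : E) : ‖v‖ ^ 2 - ‖w‖ ^ 2 = ⟪v + w, v - w⟫ := by
  simp only [inner_add_left, inner_sub_right, real_inner_self_eq_norm_sq, real_inner_comm v w]
  ring

lemma IsSkorohodSolution.norm_sub_sq_sub_le_of_osc (hS : IsSkorohodSolution D h x k T)
    (hS' : IsSkorohodSolution D h x' k' T) (hA : CondA D r₀) {ρ ρ' : Measure ℝ}
    [IsFiniteMeasure ρ] [IsFiniteMeasure ρ'] (hρ : IsReflectionBound D x k T ρ)
    (hρ' : IsReflectionBound D x' k' T ρ') {s t B ε : ℝ} (hs : 0 ≤ s) (hst : s ≤ t) (ht : t ≤ T)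
    (hB : ∀ u ∈ Icc s t, ‖x u - x' u‖ ^ 2 ≤ B)
    (hε : ∀ u ∈ Icc s t, ∀ u' ∈ Icc s t, ‖(x u - x' u) - (x u' - x' u')‖ ≤ ε) :
    ‖x t - x' t‖ ^ 2 - ‖x s - x' s‖ ^ 2 ≤ (B / r₀ + 2 * ε) * (ρ + ρ').real (Ioc s t) := by
  have hsub : Icc s t ⊆ Icc 0 T := Icc_subset_Icc hs ht
  have hx u (hu : u ∈ Icc s t) := hS.mem_closure u (hsub hu)
  have hx' u (hu : u ∈ Icc s t) := hS'.mem_closure u (hsub hu)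
  have hk := hρ.inner_sub_add_sub_le hA hs hst ht hx hx' hB hε
  have hk' := hρ'.inner_sub_add_sub_le (B := B) (ε := ε) hA hs hst ht hx' hx
    (fun u hu => norm_sub_rev (x u) _ ▸ hB u hu) fun u hu u' hu' => by
      have := hε u' hu' u hu
      rwa [← neg_sub (x u'), ← neg_sub (x u), neg_sub_neg]
  rw [norm_sq_sub_norm_sq_eq_inner,
    hS.sub_sub_sub hS' (hsub (left_mem_Icc.2 hst)) (hsub (right_mem_Icc.2 hst)), inner_sub_right,
    measureReal_add_apply, mul_add]
  have hneg : ⟪(x' t - x t) + (x' s - x s), k' t - k' s⟫ =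
      -⟪(x t - x' t) + (x s - x' s), k' t - k' s⟫ := by
    rw [← inner_neg_left, neg_add, neg_sub, neg_sub]
  linarith

lemma IsSkorohodSolution.norm_sub_sq_sub_le (hS : IsSkorohodSolution D h x k T)
    (hS' : IsSkorohodSolution D h x' k' T) (hA : CondA D r₀) {ρ ρ' : Measure ℝ}
    [IsFiniteMeasure ρ] [IsFiniteMeasure ρ'] (hρ : IsReflectionBound D x k T ρ)
    (hρ' : IsReflectionBound D x' k' T ρ') {s t B : ℝ} (hs : 0 ≤ s) (hst : s ≤ t) (ht : t ≤ T)
    (hB : ∀ u ∈ Icc s t, ‖x u - x' u‖ ^ 2 ≤ B) :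
    ‖x t - x' t‖ ^ 2 - ‖x s - x' s‖ ^ 2 ≤ B / r₀ * (ρ + ρ').real (Ioc s t) := by
  have happrox (ε : ℝ) (hε : 0 < ε) : ‖x t - x' t‖ ^ 2 - ‖x s - x' s‖ ^ 2 ≤
      (B / r₀ + 2 * ε) * (ρ + ρ').real (Ioc s t) := by
    obtain ⟨δ, hδ, huc⟩ := Metric.uniformContinuousOn_iff_le.1
      (isCompact_Icc.uniformContinuousOn_of_continuous (hS.cont.sub hS'.cont)) ε hε
    refine sub_le_mul_measureReal_Ioc_of_local (φ := fun t => ‖x t - x' t‖ ^ 2) hδ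
      (fun a b hsa hab hbt hba => ?_) hst
    have hsub : Icc a b ⊆ Icc 0 T := Icc_subset_Icc (hs.trans hsa) (hbt.trans ht)
    refine hS.norm_sub_sq_sub_le_of_osc hS' hA hρ hρ' (hs.trans hsa) hab (hbt.trans ht)
      (fun u hu => hB u ⟨hsa.trans hu.1, hu.2.trans hbt⟩) fun u hu u' hu' => ?_
    rw [← dist_eq_norm]
    exact huc u (hsub hu) u' (hsub hu') ((Real.dist_le_of_mem_Icc hu hu').trans hba)
  have hlim : Tendsto (fun ε => (B / r₀ + 2 * ε) * (ρ + ρ').real (Ioc s t)) (𝓝[>] 0)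
      (𝓝 ((B / r₀ + 2 * 0) * (ρ + ρ').real (Ioc s t))) :=
    (Continuous.tendsto (by fun_prop) 0).mono_left nhdsWithin_le_nhds
  rw [mul_zero, add_zero] at hlim
  exact ge_of_tendsto hlim (eventually_mem_nhdsWithin.mono happrox)

theorem IsSkorohodSolution.eq (hS : IsSkorohodSolution D h x k T)
    (hS' : IsSkorohodSolution D h x' k' T) (hA : CondA D r₀) {t : ℝ} (ht : t ∈ Icc 0 T) :
    x t = x' t ∧ k t = k' t := by
  have hT : 0 ≤ T := ht.1.trans ht.2
  obtain ⟨ρ, _, hρ⟩ := hS.exists_isReflectionBound hT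
  obtain ⟨ρ', _, hρ'⟩ := hS'.exists_isReflectionBound hT
  have hsq : ‖x t - x' t‖ ^ 2 = 0 :=
    eq_zero_of_sub_le_mul_measureReal_Ioc (φ := fun t => ‖x t - x' t‖ ^ 2) (ρ := ρ + ρ')
      (inv_nonneg.2 hA.1.le) ((hS.cont.sub hS'.cont).norm.pow 2) (fun _ => sq_nonneg _)
      (by simp [hS.init, hS'.init]) (fun s t B hs hst htT hB => by
        rw [inv_mul_eq_div]
        exact hS.norm_sub_sq_sub_le hS' hA hρ hρ' hs hst htT hB) t ht
  have hx : x t = x' t := by simpa [sub_eq_zero] using hsq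
  exact ⟨hx, add_left_cancel (((hS.decomp t ht).symm.trans hx).trans (hS'.decomp t ht))⟩

end SkorohodUniqueness

theorem skorohod_existence_uniqueness_general {d : ℕ} {D : Set (Ed d)} {r₀ δ₀ β : ℝ}
    (hA : CondA D r₀) (hB : CondB D δ₀ β) {h : ℝ → Ed d} (hh : ContinuousOn h (Ici 0))
    (h0 : h 0 ∈ closure D) :
    ∃ x k : ℝ → Ed d,
      (∀ T > (0 : ℝ), IsSkorohodSolution D h x k T) ∧
      ∀ x' k' : ℝ → Ed d, (∀ T > (0 : ℝ), IsSkorohodSolution D h x' k' T) →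
        (EqOn x' x (Ici 0) ∧ EqOn k' k (Ici 0)) := by
  obtain ⟨x, k, hsol⟩ := exists_forall_isSkorohodSolution hA hB hh h0
  refine ⟨x, k, fun T _ => hsol T, fun x' k' hsol' => ?_⟩
  have heq (t : ℝ) (ht : t ∈ Ici 0) : x' t = x t ∧ k' t = k t :=
    (hsol' (t + 1) (by linarith [mem_Ici.1 ht])).eq (hsol (t + 1)) hA ⟨ht, by linarith⟩
  exact ⟨fun t ht => (heq t ht).1, fun t ht => (heq t ht).2⟩

/-- Lions–Sznitman. If `D` is a bounded domain in `ℝ^d` satisfying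
conditions (A) and (D), then for every continuous `h : [0,∞) → ℝ^d` with `h 0 ∈ closure D`
there is a unique pair `(x, k)` solving the Skorohod problem `(h, D, 𝒩)`. -/
theorem skorohod_existence_uniqueness
    {d : ℕ} (D : Set (Ed d)) (hD_open : IsOpen D) (hD_conn : IsConnected D)
    (hD_bdd : Bornology.IsBounded D)
    (r₀ : ℝ) (hA : CondA D r₀)
    (m : ℕ) (lam R : ℝ) (a xs : Fin m → Ed d) (hDD : CondD D m lam R a xs)
    (h : ℝ → Ed d) (hh : ContinuousOn h (Ici 0)) (h0 : h 0 ∈ closure D) :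
    ∃ x k : ℝ → Ed d,
      (∀ T > (0:ℝ), IsSkorohodSolution D h x k T) ∧
      ∀ x' k' : ℝ → Ed d, (∀ T > (0:ℝ), IsSkorohodSolution D h x' k' T) →
        (EqOn x' x (Ici 0) ∧ EqOn k' k (Ici 0)) := by
  obtain ⟨β, hB⟩ := hDD.exists_condB
  exact skorohod_existence_uniqueness_general hA hB hh h0

end
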